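/- Let q be a prime and let d₁, d₂ be integers coprime to q. Then ∑_{α = 0}^{q−1} S(1, αd₁; q)·S(1, αd₂; q) equals q·φ(q) if d₁ ≡ d₂ (mod q), and equals −q otherwise. -/

import Mathlib

open Finset

/-- `e_q(x) = exp(2πi x / q)`. -/
noncomputable def expq (q : ℕ) (x : ℤ) : ℂ :=
  Complex.exp (2 * Real.pi * Complex.I * x / q)

/-- The Kloosterman sum `S(a, b; q) = ∑_{x ∈ (ℤ/qℤ)ˣ} e_q(a x + b x⁻¹)`. -/
noncomputable def kloos (a b : ℤ) (q : ℕ) [NeZero q] : ℂ :=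
  ∑ x : (ZMod q)ˣ,
    expq q (a * ((x : ZMod q).val : ℤ) + b * ((((x⁻¹ : (ZMod q)ˣ) : ZMod q)).val : ℤ))

lemma expq_eq (q : ℕ) [NeZero q] (x : ℤ) : expq q x = ZMod.stdAddChar (x : ZMod q) := by
  rw [ZMod.stdAddChar_coe, expq]

lemma kloos_eq (q : ℕ) [NeZero q] (b : ℤ) :
    kloos 1 b q = ∑ x : (ZMod q)ˣ,
      ZMod.stdAddChar ((x : ZMod q) + (b : ZMod q) * ((x⁻¹ : (ZMod q)ˣ) : ZMod q)) := by
  unfold kloos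
  refine Finset.sum_congr rfl fun x _ => ?_
  rw [expq_eq]
  congr 1
  push_cast
  simp only [ZMod.natCast_val, ZMod.cast_id', id, one_mul]

lemma sum_range_zmod (q : ℕ) [NeZero q] (f : ZMod q → ℂ) :
    ∑ α ∈ Finset.range q, f (α : ZMod q) = ∑ a : ZMod q, f a := by
  refine Finset.sum_bij' (fun a _ => (a : ZMod q)) (fun a _ => a.val) ?_ ?_ ?_ ?_ ?_
  · intros; simp
  · intro a _; simpa using ZMod.val_lt a
  · intro a ha; exact ZMod.val_cast_of_lt (by simpa using ha)
  · intro a _; simp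
  · intros; rfl

lemma sum_units_char (q : ℕ) [NeZero q] [Fact q.Prime] (c : ZMod q) :
    ∑ x : (ZMod q)ˣ, ZMod.stdAddChar ((x : ZMod q) * c)
      = (if c = 0 then (q : ℂ) else 0) - 1 := by
  have h := AddChar.sum_mulShift c (ZMod.isPrimitive_stdAddChar q)
  rw [Fintype.sum_eq_add_sum_compl (0 : ZMod q)] at h
  have h2 : ∑ x : (ZMod q)ˣ, ZMod.stdAddChar ((x : ZMod q) * c)
      = ∑ x ∈ ({0}ᶜ : Finset (ZMod q)), ZMod.stdAddChar (x * c) := by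
    refine Finset.sum_bij (fun x _ => (x : ZMod q)) ?_ ?_ ?_ ?_
    · intro x _; simp
    · intro x _ y _ h; exact Units.ext h
    · intro b hb
      exact ⟨Units.mk0 b (by simpa using hb), by simp, rfl⟩
    · intros; rfl
  rw [h2]
  simp only [zero_mul, AddChar.map_zero_eq_one, ZMod.card] at h
  rw [eq_sub_iff_add_eq, add_comm, h]
  split_ifs <;> simp

/-- For a prime `q` and integers `d₁`, `d₂` coprime to `q`,
`∑_{α=0}^{q−1} S(1, αd₁; q) S(1, αd₂; q)` equals `q·φ(q)` if `d₁ ≡ d₂ (mod q)`,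
and `−q` otherwise. -/
theorem sum_kloos_mul_kloos (q : ℕ) [NeZero q] (hq : q.Prime) (d₁ d₂ : ℤ)
    (h₁ : IsCoprime d₁ (q : ℤ)) (h₂ : IsCoprime d₂ (q : ℤ)) :
    ∑ α ∈ Finset.range q, kloos 1 ((α : ℤ) * d₁) q * kloos 1 ((α : ℤ) * d₂) q
      = if (q : ℤ) ∣ (d₁ - d₂) then (q : ℂ) * q.totient else -(q : ℂ) := by
  have : Fact q.Prime := ⟨hq⟩
  have key : ∀ d : ℤ, IsCoprime d (q : ℤ) → ∃ u : (ZMod q)ˣ, (u : ZMod q) = d := by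
    rintro d ⟨a, b, h⟩
    have h' : (a : ZMod q) * d = 1 := by
      have := congrArg (Int.cast : ℤ → ZMod q) h
      simpa using this
    exact ⟨Units.mk0 (d : ZMod q) (right_ne_zero_of_mul_eq_one h'), rfl⟩
  obtain ⟨u, hu⟩ := key d₁ h₁
  obtain ⟨v, hv⟩ := key d₂ h₂
  have hdvd : (q : ℤ) ∣ (d₁ - d₂) ↔ u = v := by
    rw [← ZMod.intCast_zmod_eq_zero_iff_dvd, Units.ext_iff, hu, hv]
    push_cast
    exact sub_eq_zero
  simp only [kloos_eq, hdvd, Int.cast_mul, Int.cast_natCast]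
  rw [← hu, ← hv]
  rw [sum_range_zmod q (fun a : ZMod q =>
    (∑ x : (ZMod q)ˣ, ZMod.stdAddChar ((x : ZMod q) + a * (u : ZMod q) * ((x⁻¹ : (ZMod q)ˣ) : ZMod q))) *
    ∑ x : (ZMod q)ˣ, ZMod.stdAddChar ((x : ZMod q) + a * (v : ZMod q) * ((x⁻¹ : (ZMod q)ˣ) : ZMod q)))]
  simp only [Finset.sum_mul_sum]
  rw [Finset.sum_comm]
  have inner : ∀ x : (ZMod q)ˣ, (∑ a : ZMod q, ∑ y : (ZMod q)ˣ,
      (ZMod.stdAddChar ((x : ZMod q) + a * (u : ZMod q) * ((x⁻¹ : (ZMod q)ˣ) : ZMod q)) : ℂ) *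
      ZMod.stdAddChar ((y : ZMod q) + a * (v : ZMod q) * ((y⁻¹ : (ZMod q)ˣ) : ZMod q)))
      = q * ZMod.stdAddChar ((x : ZMod q) * (1 - (v : ZMod q) * ((u⁻¹ : (ZMod q)ˣ) : ZMod q))) := by
    intro x
    rw [Finset.sum_comm]
    have : ∀ y : (ZMod q)ˣ, (∑ a : ZMod q,
      (ZMod.stdAddChar ((x : ZMod q) + a * (u : ZMod q) * ((x⁻¹ : (ZMod q)ˣ) : ZMod q)) : ℂ) *
      ZMod.stdAddChar ((y : ZMod q) + a * (v : ZMod q) * ((y⁻¹ : (ZMod q)ˣ) : ZMod q)))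
      = if y = -(x * v * u⁻¹) then
        (q : ℂ) * ZMod.stdAddChar ((x : ZMod q) + (y : ZMod q)) else 0 := by
      intro y
      have h := AddChar.sum_mulShift ((u : ZMod q) * ((x⁻¹ : (ZMod q)ˣ) : ZMod q)
        + (v : ZMod q) * ((y⁻¹ : (ZMod q)ˣ) : ZMod q)) (ZMod.isPrimitive_stdAddChar q)
      have hiff : ((u : ZMod q) * ((x⁻¹ : (ZMod q)ˣ) : ZMod q)
        + (v : ZMod q) * ((y⁻¹ : (ZMod q)ˣ) : ZMod q)) = 0 ↔ y = -(x * v * u⁻¹) := by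
        have hx := x.ne_zero
        have hy := y.ne_zero
        have hu0 := u.ne_zero
        rw [Units.ext_iff]
        push_cast
        field_simp
        constructor
        · intro h; linear_combination h
        · intro h; linear_combination h
      rw [ZMod.card] at h
      simp only [hiff] at h
      calc _ = ZMod.stdAddChar ((x : ZMod q) + (y : ZMod q)) * ∑ a : ZMod q,
            (ZMod.stdAddChar (a * ((u : ZMod q) * ((x⁻¹ : (ZMod q)ˣ) : ZMod q)
              + (v : ZMod q) * ((y⁻¹ : (ZMod q)ˣ) : ZMod q))) : ℂ) := by
            rw [Finset.mul_sum]
            refine Finset.sum_congr rfl fun a _ => ?_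
            rw [← AddChar.map_add_eq_mul, ← AddChar.map_add_eq_mul]
            congr 1
            ring
        _ = _ := by
            rw [h]
            split_ifs <;> simp [mul_comm]
    simp only [this, Finset.sum_ite_eq', Finset.sum_ite_eq, Finset.mem_univ, if_true]
    congr 2
    push_cast
    ring
  rw [Finset.sum_congr rfl fun x _ => inner x, ← Finset.mul_sum, sum_units_char]
  have hc : (1 - (v : ZMod q) * ((u⁻¹ : (ZMod q)ˣ) : ZMod q)) = 0 ↔ u = v := by
    rw [Units.ext_iff, sub_eq_zero, eq_comm, Units.mul_inv_eq_one (u := u), eq_comm]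
  simp only [hc]
  rw [Nat.totient_prime hq, Nat.cast_sub hq.one_le]
  split_ifs <;> simp
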